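/- arXiv:1705.03235 — 6 statements merged into one kernel-verified Lean document; each statement's English description precedes it below -/
import Mathlib

section
/- Let V be a 3-dimensional vector space over E carrying a nondegenerate hermitian form J with respect to the involution α, and assume there exists a nonzero vector v ∈ V with J(v,v) = 0. Then there exists a basis (e₁, e₂, e₃) of V and an element b ∈ E fixed by α (i.e. b lies in the fixed field F) such that J(e₁,e₃) = J(e₃,e₁) = 1, J(e₂,e₂) = b, and J(eᵢ,eⱼ) = 0 for every other pair (i,j); that is, the matrix of J in this basis is [[0,0,1],[0,b,0],[1,0,0]]. -/
/-- A nondegenerate hermitian form on a 3-dimensional space admitting a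
nonzero isotropic vector has, in a suitable basis, the matrix `[[0,0,1],[0,b,0],[1,0,0]]`
with `b` fixed by the involution `α`. -/
theorem hermitian_form_isotropic_basis
    (E : Type*) [Field E] (α : E ≃+* E)
    (hα2 : ∀ x, α (α x) = x) (hα : ∃ x, α x ≠ x)
    (V : Type*) [AddCommGroup V] [Module E V]
    [FiniteDimensional E V] (hdim : Module.finrank E V = 3)
    (J : V → V → E)
    (hadd1 : ∀ x x' y, J (x + x') y = J x y + J x' y)
    (hadd2 : ∀ x y y', J x (y + y') = J x y + J x y')
    (hsmul1 : ∀ (l : E) (x y : V), J (l • x) y = l * J x y)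
    (hsmul2 : ∀ (l : E) (x y : V), J x (l • y) = α l * J x y)
    (hherm : ∀ x y, J y x = α (J x y))
    (hnd : ∀ x, (∀ y, J x y = 0) → x = 0)
    (v : V) (hv : v ≠ 0) (hiso : J v v = 0) :
    ∃ (e : Module.Basis (Fin 3) E V) (b : E), α b = b ∧
      J (e 0) (e 2) = 1 ∧ J (e 2) (e 0) = 1 ∧ J (e 1) (e 1) = b ∧
      (∀ i j : Fin 3,
        ¬((i = 0 ∧ j = 2) ∨ (i = 2 ∧ j = 0) ∨ (i = 1 ∧ j = 1)) →
        J (e i) (e j) = 0) := by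
  have trace : ∃ s : E, s + α s = 1 := by
    have h0 : ∃ s : E, s + α s ≠ 0 := by
      by_contra h
      push Not at h
      obtain ⟨x, hx⟩ := hα
      apply hx
      have h1 := h 1
      rw [map_one] at h1
      have h2 := h x
      linear_combination h2 - x * h1
    obtain ⟨s, hs⟩ := h0
    refine ⟨s / (s + α s), ?_⟩
    rw [map_div₀, map_add, hα2, add_comm (α s) s, ← add_div, div_self hs]
  obtain ⟨s, hs⟩ := trace
  have hw : ∃ w, J v w = 1 := by
    by_contra h
    push Not at h
    apply hv
    apply hnd
    intro y
    by_contra hy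
    apply h (α (J v y)⁻¹ • y)
    rw [hsmul2, hα2, inv_mul_cancel₀ hy]
  obtain ⟨w₀, hw₀⟩ := hw
  have hw₀' : J w₀ v = 1 := by rw [hherm v w₀, hw₀, map_one]
  obtain ⟨w, hvw, hww⟩ : ∃ w, J v w = 1 ∧ J w w = 0 := by
    refine ⟨w₀ + (-(J w₀ w₀) * s) • v, ?_, ?_⟩
    · rw [hadd2, hsmul2, hiso, hw₀]; ring
    · simp only [hadd1, hadd2, hsmul1, hsmul2, hiso, hw₀, hw₀', map_mul, map_neg, ← hherm]
      linear_combination -(J w₀ w₀) * hs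
  have hwv : J w v = 1 := by rw [hherm v w, hvw, map_one]
  let f : V →ₗ[E] E × E :=
    { toFun := fun x => (J x v, J x w)
      map_add' := by intro x y; simp [hadd1]
      map_smul' := by intro l x; simp [hsmul1] }
  have hk : LinearMap.ker f ≠ ⊥ := by
    apply LinearMap.ker_ne_bot_of_finrank_lt
    simp [hdim]
  obtain ⟨u, hu, hu0⟩ := (Submodule.ne_bot_iff _).1 hk
  have hu' : (J u v, J u w) = (0, 0) := hu
  obtain ⟨huv, huw⟩ := Prod.mk.inj hu'
  have hvu : J v u = 0 := by rw [hherm u v, huv, map_zero]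
  have hwu : J w u = 0 := by rw [hherm u w, huw, map_zero]
  have hz : ∀ y, J 0 y = 0 := by
    intro y
    have := hsmul1 0 0 y
    simpa using this
  have hli : LinearIndependent E ![v, u, w] := by
    rw [Fintype.linearIndependent_iff]
    intro g hg
    simp [Fin.sum_univ_three] at hg
    have h1 := congrArg (fun x => J x v) hg
    have h2 := congrArg (fun x => J x w) hg
    simp [hadd1, hsmul1, hz, hiso, huv, hwv] at h1
    simp [hadd1, hsmul1, hz, hvw, huw, hww] at h2
    simp [h1, h2, hu0] at hg
    intro i
    fin_cases i <;> assumption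
  let e := basisOfLinearIndependentOfCardEqFinrank hli (by simp [hdim])
  have he : ⇑e = ![v, u, w] := coe_basisOfLinearIndependentOfCardEqFinrank hli _
  refine ⟨e, J u u, (hherm u u).symm, ?_⟩
  rw [he]
  refine ⟨hvw, hwv, rfl, ?_⟩
  intro i j hij
  fin_cases i <;> fin_cases j <;>
    simp [hiso, hvu, huv, huw, hwu, hww] at hij ⊢
end

section
/- Let n ≥ 0 be a natural number, let G be the free abelian group ℤⁿ, and let M be a one-dimensional complex representation of G (given by a homomorphism ρ : G → ℂ^×) such that the action is nontrivial, i.e. there exists x ∈ G with ρ(x) ≠ 1. Then for every k ≥ 0 the group cohomology H^k(G, M) vanishes. -/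
/-- The one-dimensional representation of a group `G` on `ℂ` given by a character
`ρ : G →* ℂˣ`, acting by scalar multiplication. -/
noncomputable def charRep (G : Type*) [Group G] (ρ : G →* ℂˣ) : Representation ℂ G ℂ where
  toFun g := (ρ g : ℂ) • (LinearMap.id : ℂ →ₗ[ℂ] ℂ)
  map_one' := by
    ext
    simp
  map_mul' g h := by
    ext
    simp [mul_comm]

open CategoryTheory in
/-- A central element acts on a complex of representations by a chain map. -/
noncomputable def applyChain {k G : Type} [CommRing k] [CommGroup G]
    (P : ChainComplex (Rep k G) ℕ) (g : G) : P ⟶ P where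
  f i := (P.X i).applyAsHom g
  comm' i j _ := Rep.applyAsHom_comm _ _

open CategoryTheory in
lemma exactAt_linearYonedaObj_of_smul {G : Type} [CommGroup G]
    (P : ProjectiveResolution (Rep.trivial ℂ G ℂ)) (A : Rep ℂ G) (g : G) (c : ℂ) (hc : c ≠ 1)
    (hA : A.applyAsHom g = c • 𝟙 A) (n : ℕ) :
    (P.complex.linearYonedaObj ℂ A).ExactAt n := by
  have comm : (applyChain P.complex g - 𝟙 _) ≫ P.π = 0 := by
    apply HomologicalComplex.to_single_hom_ext
    have h : (P.complex.X 0).applyAsHom g ≫ P.π.f 0 = P.π.f 0 := by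
      rw [Rep.applyAsHom_comm]
      have : (((ChainComplex.single₀ (Rep ℂ G)).obj (Rep.trivial ℂ G ℂ)).X 0).applyAsHom g
          = 𝟙 _ := by
        ext x
        rfl
      rw [this, Category.comp_id]
    simp only [HomologicalComplex.comp_f, HomologicalComplex.sub_f_apply,
      HomologicalComplex.id_f, Preadditive.sub_comp, Category.id_comp,
      HomologicalComplex.zero_f]
    rw [sub_eq_zero]
    exact h
  let H := ProjectiveResolution.liftHomotopyZero _ comm
  have key : ∀ f : P.complex.X n ⟶ A, P.complex.d (n + 1) n ≫ f = 0 →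
      (c - 1) • f = dNext n H.hom ≫ f := by
    intro f hf
    have h1 := H.comm n
    have h2 : ((applyChain P.complex g - 𝟙 _ : P.complex ⟶ P.complex).f n) ≫ f
        = (c - 1) • f := by
      change ((P.complex.X n).applyAsHom g - 𝟙 _) ≫ f = _
      rw [Preadditive.sub_comp, Rep.applyAsHom_comm, hA]
      simp [sub_smul]
    rw [← h2, h1, prevD_eq H.hom (show (ComplexShape.down ℕ).Rel (n + 1) n from rfl)]
    simp [hf]
  have hc' : c - 1 ≠ 0 := sub_ne_zero.2 hc
  cases n with
  | zero =>
    rw [HomologicalComplex.exactAt_iff' _ 0 0 1 (by simp) (by simp),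
      ShortComplex.moduleCat_exact_iff]
    intro (f : P.complex.X 0 ⟶ A) hf
    have h := key f hf
    refine ⟨0, ?_⟩
    rw [map_zero]
    have h0 : dNext 0 H.hom = 0 := by
      rw [Homotopy.dNext_zero_chainComplex]
    rw [h0, Limits.zero_comp] at h
    exact ((smul_eq_zero.1 h).resolve_left hc').symm
  | succ m =>
    rw [HomologicalComplex.exactAt_iff' _ m (m + 1) (m + 2) (by simp) (by simp),
      ShortComplex.moduleCat_exact_iff]
    intro (f : P.complex.X (m + 1) ⟶ A) hf
    have h := key f hf
    rw [dNext_eq H.hom (show (ComplexShape.down ℕ).Rel (m + 1) m from rfl)] at h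
    refine ⟨(c - 1)⁻¹ • (H.hom m (m + 1) ≫ f), ?_⟩
    change P.complex.d (m + 1) m ≫ ((c - 1)⁻¹ • (H.hom m (m + 1) ≫ f)) = f
    rw [Linear.comp_smul, ← Category.assoc, ← h, smul_smul, inv_mul_cancel₀ hc', one_smul]

/-- If `ρ : ℤⁿ →* ℂˣ` is a nontrivial character, then all group cohomology of
`ℤⁿ` with coefficients in the associated one-dimensional representation vanishes. -/
theorem groupCohomology_zn_nontrivial_char_eq_zero (n : ℕ)
    (ρ : Multiplicative (Fin n → ℤ) →* ℂˣ) (hnt : ∃ x, ρ x ≠ 1) (k : ℕ) :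
    Subsingleton
      (groupCohomology (Rep.of (charRep (Multiplicative (Fin n → ℤ)) ρ)) k) := by
  obtain ⟨x, hx⟩ := hnt
  have hex := exactAt_linearYonedaObj_of_smul (Rep.barResolution ℂ (Multiplicative (Fin n → ℤ)))
    (Rep.of (charRep (Multiplicative (Fin n → ℤ)) ρ)) x (ρ x : ℂ)
    (fun h => hx (Units.ext h)) (by ext; rfl) k
  rw [HomologicalComplex.exactAt_iff_isZero_homology] at hex
  exact ModuleCat.subsingleton_of_isZero (hex.of_iso (groupCohomologyIso _ k _))
end

section
/- Let H be a subgroup of finite index in the unit group 𝓞_E^×, and let a₁, …, a_g, c₁, …, c_g be integers. If for every ε ∈ H one has ∏_{i=1}^{g} σᵢ(ε)^{aᵢ} · (conj(σᵢ(ε)))^{-cᵢ} = 1 in ℂ, then there exists an integer m such that aᵢ − cᵢ = m for every 1 ≤ i ≤ g. -/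
open NumberField

/-- If, for every unit `ε` in a finite index subgroup `H` of `𝓞_E^×`,
`∏ i, σᵢ(ε)^{aᵢ} · conj(σᵢ(ε))^{-cᵢ} = 1`, then all the differences `aᵢ - cᵢ` are equal
to a common integer `m`. -/
theorem exists_parallel_of_prod_embeddings_eq_one
    (E : Type*) [Field E] [NumberField E]
    (g : ℕ) (hg : 1 ≤ g) (hdeg : Module.finrank ℚ E = 2 * g)
    (hcomplex : IsEmpty (E →+* ℝ))
    (σ : Fin g → (E →+* ℂ))
    (hσ : ∀ τ : E →+* ℂ, ∃! i : Fin g,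
      τ = σ i ∨ τ = (starRingEnd ℂ).comp (σ i))
    (H : Subgroup (𝓞 E)ˣ) (hH : H.FiniteIndex)
    (a c : Fin g → ℤ)
    (h : ∀ ε ∈ H, ∏ i,
      (σ i ((ε : 𝓞 E) : E)) ^ (a i) *
        (starRingEnd ℂ (σ i ((ε : 𝓞 E) : E))) ^ (-(c i)) = 1) :
    ∃ m : ℤ, ∀ i, a i - c i = m := by
  classical
  have : Nonempty (Fin g) := ⟨⟨0, hg⟩⟩
  obtain ⟨i₀, hi₀⟩ := Finite.exists_max (fun i => a i - c i)
  have hinj : Function.Injective (fun i => InfinitePlace.mk (σ i)) := by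
    intro i j hij
    obtain ⟨k, -, hk⟩ := hσ (σ i)
    rw [hk i (Or.inl rfl), hk j]
    rcases InfinitePlace.mk_eq_iff.mp hij with e | e
    · exact Or.inl e
    · right
      rw [← e]
      ext x
      simp
  have hsurj : Function.Surjective (fun i => InfinitePlace.mk (σ i)) := by
    intro w
    obtain ⟨k, hk, -⟩ := hσ w.embedding
    refine ⟨k, ?_⟩
    rw [← InfinitePlace.mk_embedding w]
    refine InfinitePlace.mk_eq_iff.mpr ?_
    rcases hk with e | e
    · exact Or.inl e.symm
    · right
      rw [e]
      rfl
  have hmult : ∀ w : InfinitePlace E, w.mult = 2 := by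
    intro w
    have : ¬ w.IsReal := fun hw =>
      hcomplex.false (InfinitePlace.embedding_of_isReal hw)
    simp [InfinitePlace.mult, this]
  obtain ⟨u, hu⟩ := Units.dirichletUnitTheorem.exists_unit E (InfinitePlace.mk (σ i₀))
  have hpos : ∀ i, 0 < ‖σ i (u : E)‖ := fun i => by
    simp
  have hsum : ∑ i, Real.log ‖σ i (u : E)‖ = 0 := by
    have := Units.sum_mult_mul_log u
    rw [← (Equiv.ofBijective _ ⟨hinj, hsurj⟩).sum_comp] at this
    simp only [hmult, ← Finset.mul_sum] at this
    exact (mul_eq_zero.mp this).resolve_left (by norm_num)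
  have hb : ∑ i, ((a i - c i : ℤ) : ℝ) * Real.log ‖σ i (u : E)‖ = 0 := by
    have hn := h _ (H.pow_index_mem u)
    have hidx : (H.index : ℝ) ≠ 0 := by exact_mod_cast hH.index_ne_zero
    have h2 := congrArg (fun z : ℂ => Real.log ‖z‖) hn
    simp only [norm_prod, norm_mul, norm_zpow, RCLike.norm_conj, norm_one, Real.log_one] at h2
    have hne : ∀ i, ‖σ i (((u ^ H.index : (𝓞 E)ˣ) : 𝓞 E) : E)‖ ≠ 0 := by
      intro i; simp
    rw [Real.log_prod (fun i _ => mul_ne_zero (zpow_ne_zero _ (hne i)) (zpow_ne_zero _ (hne i)))] at h2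
    have h3 : (H.index : ℝ) * ∑ i, ((a i - c i : ℤ) : ℝ) * Real.log ‖σ i (u : E)‖ = 0 := by
      rw [← h2, Finset.mul_sum]
      refine Finset.sum_congr rfl fun i _ => ?_
      rw [Real.log_mul (zpow_ne_zero _ (hne i)) (zpow_ne_zero _ (hne i)), Real.log_zpow,
        Real.log_zpow]
      have : ‖σ i (((u ^ H.index : (𝓞 E)ˣ) : 𝓞 E) : E)‖ = ‖σ i (u : E)‖ ^ H.index := by
        simp
      rw [this, Real.log_pow]
      push_cast
      ring
    exact (mul_eq_zero.mp h3).resolve_left hidx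
  have hlog : ∀ i, i ≠ i₀ → Real.log ‖σ i (u : E)‖ < 0 := by
    intro i hi
    exact hu (InfinitePlace.mk (σ i)) (fun e => hi (hinj e))
  have hnn : ∀ i ∈ Finset.univ,
      0 ≤ (((a i - c i : ℤ) : ℝ) - ((a i₀ - c i₀ : ℤ) : ℝ)) * Real.log ‖σ i (u : E)‖ := by
    intro i _
    by_cases hi : i = i₀
    · simp [hi]
    · refine mul_nonneg_of_nonpos_of_nonpos ?_ (hlog i hi).le
      exact sub_nonpos.mpr (by exact_mod_cast hi₀ i)
  have hz : ∑ i, (((a i - c i : ℤ) : ℝ) - ((a i₀ - c i₀ : ℤ) : ℝ)) *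
      Real.log ‖σ i (u : E)‖ = 0 := by
    simp only [sub_mul, Finset.sum_sub_distrib, ← Finset.mul_sum, hsum, hb]
    simp
  refine ⟨a i₀ - c i₀, fun i => ?_⟩
  by_cases hi : i = i₀
  · rw [hi]
  · have := (Finset.sum_eq_zero_iff_of_nonneg hnn).mp hz i (Finset.mem_univ i)
    have := (mul_eq_zero.mp this).resolve_right (hlog i hi).ne
    exact_mod_cast sub_eq_zero.mp this
end

section
/- Assume moreover that E is a CM field, in the sense that there is a ring automorphism α of E such that τ ∘ α = conj ∘ τ for every embedding τ : E → ℂ. Let H be a subgroup of finite index in 𝓞_E^× which is neat, in the concrete sense that for every ε ∈ H the subgroup of ℂ^× generated by the values τ(ε), with τ ranging over all embeddings of E into ℂ, is torsion-free. Let a₁, …, a_g, c₁, …, c_g be integers such that there exists an integer m with aᵢ − cᵢ = m for every 1 ≤ i ≤ g. Then for every ε ∈ H one has ∏_{i=1}^{g} σᵢ(ε)^{aᵢ} · (conj(σᵢ(ε)))^{-cᵢ} = 1 in ℂ. -/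
open NumberField

/-- Suppose moreover that `E` is a CM field (there is an automorphism `α` of
`E` with `τ ∘ α = conj ∘ τ` for all embeddings `τ : E → ℂ`) and that `H` is a neat finite
index subgroup of `𝓞_E^×` (for each `ε ∈ H`, the subgroup of `ℂˣ` generated by all values
`τ(ε)` is torsion-free). If all differences `aᵢ - cᵢ` equal a common integer `m`, then for
every `ε ∈ H` one has `∏ i, σᵢ(ε)^{aᵢ} · conj(σᵢ(ε))^{-cᵢ} = 1`. -/
theorem prod_embeddings_eq_one_of_parallel_of_neat
    (E : Type*) [Field E] [NumberField E]
    (g : ℕ) (hg : 1 ≤ g) (hdeg : Module.finrank ℚ E = 2 * g)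
    (hcomplex : IsEmpty (E →+* ℝ))
    (σ : Fin g → (E →+* ℂ))
    (hσ : ∀ τ : E →+* ℂ, ∃! i : Fin g,
      τ = σ i ∨ τ = (starRingEnd ℂ).comp (σ i))
    (α : E ≃+* E)
    (hCM : ∀ (τ : E →+* ℂ) (x : E), τ (α x) = starRingEnd ℂ (τ x))
    (H : Subgroup (𝓞 E)ˣ) (hH : H.FiniteIndex)
    (hneat : ∀ ε ∈ H, IsMulTorsionFree
      (Subgroup.closure {z : ℂˣ | ∃ τ : E →+* ℂ, (z : ℂ) = τ ((ε : 𝓞 E) : E)}))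
    (a c : Fin g → ℤ) (m : ℤ) (hm : ∀ i, a i - c i = m) :
    ∀ ε ∈ H, ∏ i,
      (σ i ((ε : 𝓞 E) : E)) ^ (a i) *
        (starRingEnd ℂ (σ i ((ε : 𝓞 E) : E))) ^ (-(c i)) = 1 := by
  intro ε hε
  have htf := hneat ε hε
  set S : Set ℂˣ := {z : ℂˣ | ∃ τ : E →+* ℂ, (z : ℂ) = τ ((ε : 𝓞 E) : E)} with hS
  have key : ∀ z ∈ Subgroup.closure S, ∀ n : ℕ, n ≠ 0 → z ^ n = 1 → z = 1 := by
    intro z hz n hn h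
    have h2 : (⟨z, hz⟩ : Subgroup.closure S) ^ n = 1 := Subtype.ext h
    have h3 := (pow_eq_one_iff_left hn).1 h2
    exact congrArg Subtype.val h3
  let U : (E →+* ℂ) → ℂˣ := fun τ => Units.map (τ.comp (algebraMap (𝓞 E) E)).toMonoidHom ε
  have hU : ∀ τ, (U τ : ℂ) = τ ((ε : 𝓞 E) : E) := fun τ => rfl
  have hUmem : ∀ τ, U τ ∈ Subgroup.closure S := fun τ => Subgroup.subset_closure ⟨τ, hU τ⟩
  have hne : ((ε : 𝓞 E) : E) ≠ 0 := by
    intro h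
    exact ε.ne_zero (NumberField.RingOfIntegers.ext (by simpa using h))
  -- `ε / α ε` is a root of unity
  have hroot : ∃ n : ℕ, 0 < n ∧
      (((ε : 𝓞 E) : E) * α (((ε⁻¹ : (𝓞 E)ˣ) : 𝓞 E) : E)) ^ n = 1 := by
    have hinv : ((ε : 𝓞 E) : E) * (((ε⁻¹ : (𝓞 E)ˣ) : 𝓞 E) : E) = 1 := by
      rw [← map_mul, Units.mul_inv, map_one]
    have hint : IsIntegral ℤ (((ε : 𝓞 E) : E) * α (((ε⁻¹ : (𝓞 E)ˣ) : 𝓞 E) : E)) := by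
      refine IsIntegral.mul (RingOfIntegers.isIntegral_coe _) ?_
      exact (RingOfIntegers.isIntegral_coe ((ε⁻¹ : (𝓞 E)ˣ) : 𝓞 E)).map
        (α : E →+* E).toIntAlgHom
    obtain ⟨n, hn, h⟩ := NumberField.Embeddings.pow_eq_one_of_norm_eq_one E ℂ hint (by
      intro φ
      rw [map_mul, hCM, norm_mul, RCLike.norm_conj, ← norm_mul, ← map_mul, hinv]
      simp)
    exact ⟨n, hn, h⟩
  have hreal : ∀ τ : E →+* ℂ,
      starRingEnd ℂ (τ ((ε : 𝓞 E) : E)) = τ ((ε : 𝓞 E) : E) := by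
    intro τ
    obtain ⟨n, hn, h⟩ := hroot
    have hinv : (((ε⁻¹ : (𝓞 E)ˣ) : 𝓞 E) : E) = (((ε : 𝓞 E) : E))⁻¹ := by
      apply eq_inv_of_mul_eq_one_left
      rw [← map_mul, Units.inv_mul, map_one]
    have h1 : U τ * (U ((starRingEnd ℂ).comp τ))⁻¹ = 1 := by
      refine key _ (mul_mem (hUmem _) (inv_mem (hUmem _))) n hn.ne' ?_
      apply Units.ext
      have := congrArg τ h
      rw [map_pow, map_mul, hCM, hinv, map_inv₀, map_inv₀, map_one] at this
      rw [Units.val_pow_eq_pow_val, Units.val_mul, Units.val_inv_eq_inv_val, hU, hU]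
      exact this
    have h2 := congrArg Units.val (mul_inv_eq_one.1 h1)
    exact h2.symm
  -- the product of the `σ i ε` is one
  have hP : ∏ i, U (σ i) = 1 := by
    refine key _ (Subgroup.prod_mem _ fun i _ => hUmem _) 4 (by norm_num) ?_
    apply Units.ext
    let f : Fin g × Bool → (E →ₐ[ℚ] ℂ) := fun p =>
      (if p.2 then σ p.1 else (starRingEnd ℂ).comp (σ p.1)).toRatAlgHom
    have hf : Function.Bijective f := by
      rw [Fintype.bijective_iff_surjective_and_card]
      constructor
      · intro τ
        obtain ⟨i, hi | hi, -⟩ := hσ (τ : E →+* ℂ)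
        · refine ⟨(i, true), ?_⟩
          ext x
          exact (congrArg (fun t : E →+* ℂ => t x) hi).symm
        · refine ⟨(i, false), ?_⟩
          ext x
          exact (congrArg (fun t : E →+* ℂ => t x) hi).symm
      · rw [AlgHom.card, hdeg]
        simp [mul_comm]
    have hnorm := Algebra.norm_eq_prod_embeddings ℚ ℂ ((ε : 𝓞 E) : E)
    have hsq : ∏ τ : E →ₐ[ℚ] ℂ, τ ((ε : 𝓞 E) : E)
        = (∏ i, σ i ((ε : 𝓞 E) : E)) ^ 2 := by
      rw [← Function.Bijective.prod_comp hf (fun τ => τ ((ε : 𝓞 E) : E)),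
        Fintype.prod_prod_type, ← Finset.prod_pow]
      refine Finset.prod_congr rfl fun i _ => ?_
      rw [Fintype.prod_bool, sq]
      change σ i _ * starRingEnd ℂ (σ i _) = _
      rw [hreal]
    have hN : (Algebra.norm ℚ ((ε : 𝓞 E) : E)) ^ 2 = 1 := by
      have := NumberField.isUnit_iff_norm.1 ε.isUnit
      rw [← sq_abs, ← RingOfIntegers.coe_norm, this, one_pow]
    rw [Units.val_pow_eq_pow_val, Units.coe_prod]
    simp only [hU]
    rw [show 4 = 2 * 2 from rfl, pow_mul, ← hsq, ← hnorm, ← map_pow, hN]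
    simp
  have hP' : ∏ i, σ i ((ε : 𝓞 E) : E) = 1 := by
    have := congrArg Units.val hP
    rw [Units.coe_prod] at this
    exact this
  calc _ = ∏ i, (σ i ((ε : 𝓞 E) : E)) ^ m := by
        refine Finset.prod_congr rfl fun i _ => ?_
        rw [hreal, ← zpow_add₀ ((map_ne_zero _).2 hne), ← hm i, sub_eq_add_neg]
    _ = 1 := by rw [Finset.prod_zpow, hP', one_zpow]
end

section
/- Let σ be a positive permutation of {1,2,3} and τ a permutation of {1,2,3} that is not positive, and let (a,b,c) and (a',b',c') be dominant triples of integers. Then the integer (σ•(a,b,c))₁ − (σ•(a,b,c))₃ is different from the integer (τ•(a',b',c'))₁ − (τ•(a',b',c'))₃, where (v)₁ and (v)₃ denote the first and third entries of a triple v. -/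
/-- The half-sum weight `ρ = (1, 0, -1)`. -/
def rhoWt : Fin 3 → ℤ := ![1, 0, -1]

/-- The dot action of a permutation `σ` of `{1,2,3}` on a triple `v ∈ ℤ³`:
permute the entries of `v + ρ = (v₁+1, v₂, v₃-1)` according to `σ`, then subtract
`ρ = (1, 0, -1)`. -/
def dotAct (σ : Equiv.Perm (Fin 3)) (v : Fin 3 → ℤ) : Fin 3 → ℤ :=
  fun i => (v (σ⁻¹ i) + rhoWt (σ⁻¹ i)) - rhoWt i

/-- A permutation of `{1,2,3}` is positive if it is the identity or one of the
transpositions `(1 2)`, `(2 3)` (i.e. its Coxeter length is at most 1). -/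
def IsPositivePerm (σ : Equiv.Perm (Fin 3)) : Prop :=
  σ = 1 ∨ σ = Equiv.swap 0 1 ∨ σ = Equiv.swap 1 2

/-- A triple of integers is dominant if its entries are weakly decreasing. -/
def IsDominantTriple (v : Fin 3 → ℤ) : Prop := v 1 ≤ v 0 ∧ v 2 ≤ v 1

/-- A triple of integers is regular if its entries are strictly decreasing. -/
def IsRegularTriple (v : Fin 3 → ℤ) : Prop := v 1 < v 0 ∧ v 2 < v 1

theorem pos_lt_aux : ∀ σ : Equiv.Perm (Fin 3),
    (σ = 1 ∨ σ = Equiv.swap 0 1 ∨ σ = Equiv.swap 1 2) ↔ σ⁻¹ 0 < σ⁻¹ 2 := by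
  decide

theorem shifted_lt_aux (v : Fin 3 → ℤ) (hv : IsDominantTriple v) (i j : Fin 3) (h : i < j) :
    v j + rhoWt j < v i + rhoWt i := by
  obtain ⟨h1, h2⟩ := hv
  fin_cases i <;> fin_cases j <;> simp [rhoWt] at h ⊢ <;> omega

/-- For a positive permutation `σ`, a non-positive permutation `τ`, and
dominant triples `v`, `v'`, the quantities `(σ•v)₁ - (σ•v)₃` and `(τ•v')₁ - (τ•v')₃`
are distinct. -/
theorem dotAct_diff_ne_of_positive_of_not_positive
    (σ τ : Equiv.Perm (Fin 3)) (hσ : IsPositivePerm σ) (hτ : ¬ IsPositivePerm τ)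
    (v v' : Fin 3 → ℤ) (hv : IsDominantTriple v) (hv' : IsDominantTriple v') :
    dotAct σ v 0 - dotAct σ v 2 ≠ dotAct τ v' 0 - dotAct τ v' 2 := by
  have h1 := shifted_lt_aux v hv _ _ ((pos_lt_aux σ).1 hσ)
  have h2 : τ⁻¹ 2 < τ⁻¹ 0 := by
    have h3 : ¬ τ⁻¹ 0 < τ⁻¹ 2 := fun h => hτ ((pos_lt_aux τ).2 h)
    have h4 : τ⁻¹ 2 ≠ τ⁻¹ 0 := fun h => absurd (τ⁻¹.injective h) (by decide)
    exact lt_of_le_of_ne (not_lt.1 h3) h4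
  have h5 := shifted_lt_aux v' hv' _ _ h2
  unfold dotAct
  intro h
  linarith
end

section
/- Let r ≥ 0 and g ≥ 1 be integers, let aᵢ, bᵢ, cᵢ (1 ≤ i ≤ g) and d be integers, and let p be an integer. Then the following are equivalent. (1) There exist integers α⁺ᵢ, α⁻ᵢ, β⁺ᵢ, β⁻ᵢ, γ⁺ᵢ, γ⁻ᵢ (1 ≤ i ≤ g), each lying in the interval [0, r], such that aᵢ = α⁻ᵢ − α⁺ᵢ, bᵢ = β⁻ᵢ − β⁺ᵢ, cᵢ = γ⁻ᵢ − γ⁺ᵢ for all i, d = −Σ_{i=1}^{g}(α⁻ᵢ + β⁻ᵢ + γ⁻ᵢ), and p = Σ_{i=1}^{g}(α⁺ᵢ + α⁻ᵢ + β⁺ᵢ + β⁻ᵢ + γ⁺ᵢ + γ⁻ᵢ). (2) One has p = −2d − Σ_{i=1}^{g}(aᵢ + bᵢ + cᵢ), each of aᵢ, bᵢ, cᵢ lies in [−r, r] for every i, and 3gr + Σ_{i=1}^{g}(aᵢ⁻ + bᵢ⁻ + cᵢ⁻) ≥ −d ≥ Σ_{i=1}^{g}(aᵢ⁺ + bᵢ⁺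 + cᵢ⁺). -/
theorem interp_aux {ι : Type*} [DecidableEq ι] (s : Finset ι) (L U : ι → ℤ)
    (h : ∀ i, L i ≤ U i) : ∀ n : ℤ, ∑ i ∈ s, L i ≤ n → n ≤ ∑ i ∈ s, U i →
    ∃ f : ι → ℤ, (∀ i, L i ≤ f i ∧ f i ≤ U i) ∧ ∑ i ∈ s, f i = n := by
  induction s using Finset.induction_on with
  | empty =>
    intro n h1 h2
    simp only [Finset.sum_empty] at h1 h2
    exact ⟨L, fun i => ⟨le_refl _, h i⟩, by simp only [Finset.sum_empty]; omega⟩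
  | insert j s hj ih =>
    intro n h1 h2
    rw [Finset.sum_insert hj] at h1 h2
    have hLU : ∑ i ∈ s, L i ≤ ∑ i ∈ s, U i := Finset.sum_le_sum fun i _ => h i
    have hjj := h j
    obtain ⟨f, hf, hs⟩ := ih (n - min (U j) (n - ∑ i ∈ s, L i)) (by omega) (by omega)
    refine ⟨Function.update f j (min (U j) (n - ∑ i ∈ s, L i)), ?_, ?_⟩
    · intro i
      by_cases hi : i = j
      · subst hi
        rw [Function.update_self]
        omega
      · rw [Function.update_of_ne hi]
        exact hf i
    · rw [Finset.sum_insert hj, Function.update_self, Finset.sum_update_of_notMem hj, hs]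
      omega

theorem split_aux (L1 L2 L3 U1 U2 U3 n : ℤ) (h1 : L1 ≤ U1) (h2 : L2 ≤ U2) (h3 : L3 ≤ U3)
    (hl : L1 + L2 + L3 ≤ n) (hu : n ≤ U1 + U2 + U3) :
    ∃ x y z : ℤ, L1 ≤ x ∧ x ≤ U1 ∧ L2 ≤ y ∧ y ≤ U2 ∧ L3 ≤ z ∧ z ≤ U3 ∧ x + y + z = n := by
  refine ⟨min U1 (n - L2 - L3), min U2 (n - min U1 (n - L2 - L3) - L3),
    n - min U1 (n - L2 - L3) - min U2 (n - min U1 (n - L2 - L3) - L3), ?_⟩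
  omega

/-- characterization of the highest weights `((aᵢ,bᵢ,cᵢ)ᵢ, d)` (with
`p = -2d - Σ(aᵢ+bᵢ+cᵢ)`) arising from eigenvectors of `Λ^p((V^∨)^{⊕r})`: existence of
exponents `α±ᵢ, β±ᵢ, γ±ᵢ ∈ [0,r]` realizing the data is equivalent to the stated system
of inequalities, where `x⁺ = max x 0` and `x⁻ = min x 0`. -/
theorem exterior_power_weight_characterization
    (r g : ℕ) (hg : 1 ≤ g) (a b c : Fin g → ℤ) (d p : ℤ) :
    (∃ αp αm βp βm γp γm : Fin g → ℤ,
      (∀ i, 0 ≤ αp i ∧ αp i ≤ (r : ℤ) ∧ 0 ≤ αm i ∧ αm i ≤ (r : ℤ) ∧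
        0 ≤ βp i ∧ βp i ≤ (r : ℤ) ∧ 0 ≤ βm i ∧ βm i ≤ (r : ℤ) ∧
        0 ≤ γp i ∧ γp i ≤ (r : ℤ) ∧ 0 ≤ γm i ∧ γm i ≤ (r : ℤ)) ∧
      (∀ i, a i = αm i - αp i) ∧ (∀ i, b i = βm i - βp i) ∧ (∀ i, c i = γm i - γp i) ∧
      d = -∑ i, (αm i + βm i + γm i) ∧
      p = ∑ i, (αp i + αm i + βp i + βm i + γp i + γm i)) ↔
    (p = -2 * d - ∑ i, (a i + b i + c i) ∧
      (∀ i, -(r : ℤ) ≤ a i ∧ a i ≤ (r : ℤ) ∧ -(r : ℤ) ≤ b i ∧ b i ≤ (r : ℤ) ∧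
        -(r : ℤ) ≤ c i ∧ c i ≤ (r : ℤ)) ∧
      -d ≤ 3 * (g : ℤ) * (r : ℤ) + ∑ i, (min (a i) 0 + min (b i) 0 + min (c i) 0) ∧
      ∑ i, (max (a i) 0 + max (b i) 0 + max (c i) 0) ≤ -d) := by
  have hconst : ∑ i : Fin g, (3 * (r : ℤ) + (min (a i) 0 + min (b i) 0 + min (c i) 0))
      = 3 * (g : ℤ) * (r : ℤ) + ∑ i, (min (a i) 0 + min (b i) 0 + min (c i) 0) := by
    rw [Finset.sum_add_distrib]
    simp
    ring
  rw [← hconst]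
  constructor
  · rintro ⟨αp, αm, βp, βm, γp, γm, hb, ha, hbb, hc, rfl, rfl⟩
    refine ⟨?_, ?_, ?_, ?_⟩
    · rw [neg_mul_neg, Finset.mul_sum, ← Finset.sum_sub_distrib]
      refine Finset.sum_congr rfl fun i _ => ?_
      rw [ha, hbb, hc]; ring
    · intro i
      have := hb i; have := ha i; have := hbb i; have := hc i
      omega
    · rw [neg_neg]
      refine Finset.sum_le_sum fun i _ => ?_
      have := hb i; have := ha i; have := hbb i; have := hc i
      omega
    · rw [neg_neg]
      refine Finset.sum_le_sum fun i _ => ?_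
      have := hb i; have := ha i; have := hbb i; have := hc i
      omega
  · rintro ⟨rfl, hr, hu, hl⟩
    obtain ⟨f, hf, hs⟩ := interp_aux Finset.univ _ _
      (fun i => by have := hr i; omega) (-d) hl hu
    have key := fun i => split_aux (max (a i) 0) (max (b i) 0) (max (c i) 0)
      (r + min (a i) 0) (r + min (b i) 0) (r + min (c i) 0) (f i)
      (by have := hr i; omega) (by have := hr i; omega) (by have := hr i; omega)
      (by have := hf i; omega) (by have := hf i; omega)
    choose x y z hk using key
    have hd : ∑ i, (x i + y i + z i) = -d := by
      rw [← hs]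
      exact Finset.sum_congr rfl fun i _ => (hk i).2.2.2.2.2.2
    refine ⟨fun i => x i - a i, x, fun i => y i - b i, y, fun i => z i - c i, z,
      ?_, fun i => by ring, fun i => by ring, fun i => by ring, by omega, ?_⟩
    · intro i
      have := hk i; have := hr i
      dsimp only
      omega
    · have : -2 * d = 2 * ∑ i, (x i + y i + z i) := by rw [hd]; ring
      rw [this, Finset.mul_sum, ← Finset.sum_sub_distrib]
      refine Finset.sum_congr rfl fun i _ => ?_
      ring
end
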